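/- Fix integers d ≥ 2, q with 1 ≤ q ≤ d-1, γ with 0 ≤ γ ≤ q-1, and reals K < 0, u > 0, and let f be the density f_{d,q,γ,K} of the distance d_K(o,E∩L). Then for every real α > 0 the integral ∫_0^∞ δ^α · f(δ) dδ is finite; that is, all conditional positive moments E[d_K(o,E∩L)^α | d_K(o,E∩L) < ∞] are finite. -/

import Mathlib

open Real MeasureTheory Filter Asymptotics

/-- Surface area `ω_n = 2 π^{n/2} / Γ(n/2)` of the Euclidean unit sphere in `ℝ^n`. -/
noncomputable def omegaS (n : ℕ) : ℝ := 2 * Real.pi ^ ((n : ℝ) / 2) / Real.Gamma ((n : ℝ) / 2)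

/-- The constant `D(d,q,γ)`. -/
noncomputable def Dconst (d q γ : ℕ) : ℝ :=
  omegaS (γ + 1) * omegaS (q - γ) * omegaS (d - q) / (omegaS (d - q + γ + 1) * omegaS (d - γ))

/-- `R_K(x)`, the Euclidean (Beltrami–Klein) radius of a hyperbolic ball of radius `x`. -/
noncomputable def RK (K x : ℝ) : ℝ :=
  Real.sinh (Real.sqrt (-K) * x) /
    (Real.sqrt (-K) * Real.sqrt (1 + Real.sinh (Real.sqrt (-K) * x) ^ 2))

/-- `C_K(d,m,u)`, the invariant measure of the `m`-flats meeting the ball of radius `u`. -/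
noncomputable def Cconst (K : ℝ) (d m : ℕ) (u : ℝ) : ℝ :=
  omegaS (d - m) * Real.sqrt (-K) ^ (-(d : ℝ) + (m : ℝ) + 1) *
    ∫ r in (0:ℝ)..u,
      Real.cosh (Real.sqrt (-K) * r) ^ m * Real.sinh (Real.sqrt (-K) * r) ^ (d - m - 1)

/-- `P(d,q,γ,K,u)`, the hyperbolic intersection probability of the random flats `E` and `L`. -/
noncomputable def Pprob (d q γ : ℕ) (K u : ℝ) : ℝ :=
  Dconst d q γ * omegaS (d - γ) / Cconst K d (d - q + γ) u *
    ∫ r in (0:ℝ)..(1 / Real.sqrt (-K)),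
      r ^ ((q : ℝ) - (γ : ℝ) - 1) *
        ∫ z in (0:ℝ)..(min 1 (RK K u / r)),
          z ^ q * (1 - z ^ 2) ^ (((d : ℝ) - (q : ℝ)) / 2 - 1) *
            (1 + K * r ^ 2 * z ^ 2) ^ (-((d : ℝ) + 1) / 2)

/-- `F_{K,u}(δ)`, the distribution function of the distance of `E ∩ L` to the origin. -/
noncomputable def Fdist (d q γ : ℕ) (K u δ : ℝ) : ℝ :=
  Dconst d q γ * omegaS (d - γ) / Cconst K d (d - q + γ) u *
    ∫ r in (0:ℝ)..(RK K δ),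
      r ^ ((q : ℝ) - (γ : ℝ) - 1) *
        ∫ z in (0:ℝ)..(min 1 (RK K u / r)),
          z ^ q * (1 - z ^ 2) ^ (((d : ℝ) - (q : ℝ)) / 2 - 1) *
            (1 + K * r ^ 2 * z ^ 2) ^ (-((d : ℝ) + 1) / 2)

/-- `f_{d,q,γ,K}(δ)`, the density of the distance of `E ∩ L` to the origin. -/
noncomputable def fdens (d q γ : ℕ) (K u δ : ℝ) : ℝ :=
  Dconst d q γ * omegaS (d - γ) / Cconst K d (d - q + γ) u *
    (RK K δ ^ ((q : ℝ) - (γ : ℝ) - 1) / Real.cosh (Real.sqrt (-K) * δ) ^ 2) *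
    ∫ z in (0:ℝ)..(min 1 (RK K u / RK K δ)),
      z ^ q * (1 - z ^ 2) ^ (((d : ℝ) - (q : ℝ)) / 2 - 1) *
        (1 + K * RK K δ ^ 2 * z ^ 2) ^ (-((d : ℝ) + 1) / 2)

/-- The limiting constant `ρ(u,q,γ,κ)` in the critical phase. -/
noncomputable def rhoConst (u : ℝ) (q γ : ℕ) (κ : ℝ) : ℝ :=
  omegaS (γ + 1) * (2 * Real.pi) ^ (-((γ : ℝ) + 1) / 2) * u ^ (q + 1) *
    κ ^ (((γ : ℝ) + 1) / 2) *
    (∫ s in (0:ℝ)..u, Real.exp (κ * s ^ 2 / 2) * s ^ ((q : ℝ) - (γ : ℝ) - 1))⁻¹ *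
    ∫ r in (0:ℝ)..1,
      r ^ ((q : ℝ) - (γ : ℝ) - 1) *
        ∫ v in (0:ℝ)..(1 / r),
          v ^ q * Real.exp (-(1 / 2) * u ^ 2 * κ * v ^ 2 * (1 - r ^ 2))

/-!
Since `R_K(x) = tanh(√(-K) x) / √(-K)`, the outer factors of `f` are controlled by
`R_K(δ)^{q-γ-1} ≤ δ^{q-γ-1}` and `cosh⁻²(√(-K) δ) ≤ 4 e^{-2√(-K) δ}`. The inner integral is bounded
uniformly in `δ`: its cut-off `z ≤ R_K(u) / R_K(δ)` keeps `1 + K R_K(δ)² z²` above the positive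
constant `1 + K R_K(u)²`, and `(1 - z²)^{(d-q)/2-1}` is integrable on `[0, 1]`. Hence `δ^α f(δ)` is
dominated by a multiple of the Gamma integrand `δ^{α+q-γ-1} e^{-2√(-K) δ}`, which is integrable as
soon as `α > γ - q`.
-/

section Hyperbolic

theorem inv_cosh_sq_le (x : ℝ) : (cosh x ^ 2)⁻¹ ≤ 4 * exp (-2 * x) := by
  have half_exp_le_cosh : exp x / 2 ≤ cosh x := by
    rw [cosh_eq]
    linarith [exp_pos (-x)]
  calc (cosh x ^ 2)⁻¹ ≤ ((exp x / 2) ^ 2)⁻¹ := by gcongr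
    _ = 4 * exp (-2 * x) := by
      rw [div_pow, ← exp_nat_mul, inv_div, div_eq_mul_inv, ← exp_neg]
      norm_num

theorem monotoneOn_mul_cosh_sub_sinh :
    MonotoneOn (fun x : ℝ => x * cosh x - sinh x) (Set.Ici 0) := by
  have hderiv (x : ℝ) : HasDerivAt (fun x : ℝ => x * cosh x - sinh x) (x * sinh x) x := by
    convert! ((hasDerivAt_id x).mul (hasDerivAt_cosh x)).sub (hasDerivAt_sinh x) using 1
    simp
  refine monotoneOn_of_hasDerivWithinAt_nonneg (convex_Ici 0)
    (fun x _ => (hderiv x).continuousAt.continuousWithinAt)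
    (fun x _ => (hderiv x).hasDerivWithinAt) fun x hx => ?_
  have hx₀ : 0 ≤ x := interior_subset hx
  exact mul_nonneg hx₀ (sinh_nonneg_iff.2 hx₀)

theorem tanh_le_self {x : ℝ} (hx : 0 ≤ x) : tanh x ≤ x := by
  have hsub : 0 ≤ x * cosh x - sinh x := by
    simpa using monotoneOn_mul_cosh_sub_sinh Set.self_mem_Ici hx hx
  rw [tanh_eq_sinh_div_cosh, div_le_iff₀ (cosh_pos x)]
  linarith

theorem tanh_pos {x : ℝ} (hx : 0 < x) : 0 < tanh x := by
  rw [tanh_eq_sinh_div_cosh]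
  exact div_pos (sinh_pos_iff.2 hx) (cosh_pos x)

end Hyperbolic

section KleinRadius

variable {K x : ℝ}

theorem RK_eq_tanh_div (K x : ℝ) : RK K x = tanh (√(-K) * x) / √(-K) := by
  rw [RK, ← cosh_sq', sqrt_sq (cosh_pos _).le, tanh_eq_sinh_div_cosh, div_div,
    mul_comm (cosh _)]

theorem RK_pos (hK : K < 0) (hx : 0 < x) : 0 < RK K x := by
  have hs : 0 < √(-K) := sqrt_pos.2 (neg_pos.2 hK)
  rw [RK_eq_tanh_div]
  exact div_pos (tanh_pos (mul_pos hs hx)) hs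

theorem RK_le_self (hK : K < 0) (hx : 0 ≤ x) : RK K x ≤ x := by
  have hs : 0 < √(-K) := sqrt_pos.2 (neg_pos.2 hK)
  rw [RK_eq_tanh_div, div_le_iff₀' hs]
  exact tanh_le_self (by positivity)

theorem one_add_mul_RK_sq_pos (hK : K < 0) (x : ℝ) : 0 < 1 + K * RK K x ^ 2 := by
  have hmul_sq : K * RK K x ^ 2 = -tanh (√(-K) * x) ^ 2 := by
    rw [RK_eq_tanh_div, div_pow, sq_sqrt (neg_pos.2 hK).le]
    field_simp [hK.ne]
  linarith [tanh_sq_lt_one (√(-K) * x)]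

theorem measurable_RK (K : ℝ) : Measurable (RK K) := by
  unfold RK
  have := measurable_sinh
  fun_prop

end KleinRadius

section ParametricIntegral

variable {X E : Type*} [MeasurableSpace X] [NormedAddCommGroup E] [NormedSpace ℝ E]
  {F : X × ℝ → E} {a b : X → ℝ}

theorem stronglyMeasurable_setIntegral_Ioc (hF : StronglyMeasurable F) (ha : Measurable a)
    (hb : Measurable b) (μ : Measure ℝ) [SFinite μ] :
    StronglyMeasurable fun x => ∫ z in Set.Ioc (a x) (b x), F (x, z) ∂μ := by
  have hregion : MeasurableSet {p : X × ℝ | p.2 ∈ Set.Ioc (a p.1) (b p.1)} :=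
    (measurableSet_lt (ha.comp measurable_fst) measurable_snd).inter
      (measurableSet_le measurable_snd (hb.comp measurable_fst))
  simp_rw [← integral_indicator measurableSet_Ioc]
  exact (hF.indicator hregion).integral_prod_right'

theorem stronglyMeasurable_intervalIntegral (hF : StronglyMeasurable F) (ha : Measurable a)
    (hb : Measurable b) (μ : Measure ℝ) [SFinite μ] :
    StronglyMeasurable fun x => ∫ z in a x..b x, F (x, z) ∂μ :=
  (stronglyMeasurable_setIntegral_Ioc hF ha hb μ).sub
    (stronglyMeasurable_setIntegral_Ioc hF hb ha μ)

end ParametricIntegral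

section TruncatedIntegral

/-- The inner integral of `fdens` as a function of the Klein radius `r = R_K(δ)`, with cut-off
radius `ρ = R_K(u)` and arbitrary exponents; `fdens` has `n = q`, `s = (d - q) / 2 - 1` and
`t = -(d + 1) / 2`. -/
noncomputable def truncatedIntegral (n : ℕ) (s t K ρ r : ℝ) : ℝ :=
  ∫ z in (0:ℝ)..(min 1 (ρ / r)), z ^ n * (1 - z ^ 2) ^ s * (1 + K * r ^ 2 * z ^ 2) ^ t

theorem stronglyMeasurable_truncatedIntegral (n : ℕ) (s t K ρ : ℝ) :
    StronglyMeasurable (truncatedIntegral n s t K ρ) := by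
  have hintegrand : Measurable fun p : ℝ × ℝ =>
      p.2 ^ n * (1 - p.2 ^ 2) ^ s * (1 + K * p.1 ^ 2 * p.2 ^ 2) ^ t := by fun_prop
  exact stronglyMeasurable_intervalIntegral hintegrand.stronglyMeasurable measurable_const
    (by fun_prop : Measurable fun r : ℝ => min 1 (ρ / r)) volume

variable {s t K ρ r : ℝ}

theorem intervalIntegrable_one_sub_sq_rpow (hs : -1 < s) :
    IntervalIntegrable (fun z : ℝ => (1 - z ^ 2) ^ s) volume 0 1 := by
  have hsingular : IntervalIntegrable (fun z : ℝ => (1 - z) ^ s) volume 0 1 := by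
    simpa using (intervalIntegral.intervalIntegrable_rpow' (a := 1) (b := 0) hs).comp_sub_left 1
  have hregular : ContinuousOn (fun z : ℝ => (1 + z) ^ s) (Set.uIcc 0 1) := by
    rw [Set.uIcc_of_le zero_le_one]
    exact ContinuousOn.rpow_const (by fun_prop) fun z hz => Or.inl (by linarith [hz.1])
  refine (hsingular.mul_continuousOn hregular).congr fun z hz => ?_
  rw [Set.uIoc_of_le zero_le_one] at hz
  rw [← mul_rpow (by linarith [hz.2]) (by linarith [hz.1])]
  ring_nf

theorem norm_truncatedIntegrand_le (n : ℕ) (ht : t ≤ 0) (hK : K ≤ 0) (hρK : 0 < 1 + K * ρ ^ 2)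
    (hr : 0 < r) {z : ℝ} (hz : z ∈ Set.Ioc 0 (min 1 (ρ / r))) :
    ‖z ^ n * (1 - z ^ 2) ^ s * (1 + K * r ^ 2 * z ^ 2) ^ t‖ ≤
      (1 - z ^ 2) ^ s * (1 + K * ρ ^ 2) ^ t := by
  obtain ⟨hz₀, hzle⟩ := hz
  have hz₁ : z ≤ 1 := hzle.trans (min_le_left _ _)
  have hzr : z * r ≤ ρ := (le_div_iff₀ hr).1 (hzle.trans (min_le_right _ _))
  have hbase : 1 + K * ρ ^ 2 ≤ 1 + K * r ^ 2 * z ^ 2 := by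
    have hsq : (z * r) ^ 2 ≤ ρ ^ 2 := by gcongr
    linarith [mul_le_mul_of_nonpos_left hsq hK, mul_pow z r 2]
  have hone_sub : 0 ≤ (1 - z ^ 2) ^ s := rpow_nonneg (by nlinarith) s
  have hfactor : 0 ≤ (1 + K * r ^ 2 * z ^ 2) ^ t := rpow_nonneg (hρK.le.trans hbase) t
  rw [norm_of_nonneg (by positivity)]
  exact mul_le_mul (mul_le_of_le_one_left hone_sub (pow_le_one₀ hz₀.le hz₁))
    (rpow_le_rpow_of_nonpos hρK hbase ht) hfactor hone_sub

theorem norm_truncatedIntegral_le (n : ℕ) (hs : -1 < s) (ht : t ≤ 0) (hK : K ≤ 0) (hρ : 0 ≤ ρ)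
    (hρK : 0 < 1 + K * ρ ^ 2) (hr : 0 < r) :
    ‖truncatedIntegral n s t K ρ r‖ ≤
      ∫ z in (0:ℝ)..1, (1 - z ^ 2) ^ s * (1 + K * ρ ^ 2) ^ t := by
  have hmin₀ : 0 ≤ min 1 (ρ / r) := le_min zero_le_one (by positivity)
  have hmin₁ : min 1 (ρ / r) ≤ 1 := min_le_left _ _
  have hbound := (intervalIntegrable_one_sub_sq_rpow hs).mul_const ((1 + K * ρ ^ 2) ^ t)
  calc ‖truncatedIntegral n s t K ρ r‖
      ≤ ∫ z in (0:ℝ)..(min 1 (ρ / r)), (1 - z ^ 2) ^ s * (1 + K * ρ ^ 2) ^ t :=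
        intervalIntegral.norm_integral_le_of_norm_le hmin₀
          (.of_forall fun _ hz => norm_truncatedIntegrand_le n ht hK hρK hr hz)
          (hbound.mono_set (Set.uIcc_subset_uIcc_left (by simp [hmin₀])))
    _ ≤ ∫ z in (0:ℝ)..1, (1 - z ^ 2) ^ s * (1 + K * ρ ^ 2) ^ t := by
        refine intervalIntegral.integral_mono_interval le_rfl hmin₀ hmin₁ ?_ hbound
        filter_upwards [ae_restrict_mem measurableSet_Ioc] with z hz
        exact mul_nonneg (rpow_nonneg (by nlinarith [hz.1, hz.2]) s) (rpow_nonneg hρK.le t)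

end TruncatedIntegral

section Density

variable {d q γ : ℕ} {K u : ℝ}

theorem fdens_eq_mul_truncatedIntegral (d q γ : ℕ) (K u δ : ℝ) :
    fdens d q γ K u δ = Dconst d q γ * omegaS (d - γ) / Cconst K d (d - q + γ) u *
      (RK K δ ^ ((q : ℝ) - γ - 1) * (cosh (√(-K) * δ) ^ 2)⁻¹) *
      truncatedIntegral q (((d : ℝ) - q) / 2 - 1) (-((d : ℝ) + 1) / 2) K (RK K u) (RK K δ) :=
  rfl

theorem stronglyMeasurable_fdens (d q γ : ℕ) (K u : ℝ) :
    StronglyMeasurable (fdens d q γ K u) := by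
  have hRK := measurable_RK K
  have := measurable_cosh
  simp_rw [funext (fdens_eq_mul_truncatedIntegral d q γ K u)]
  refine StronglyMeasurable.mul (Measurable.stronglyMeasurable (by fun_prop)) ?_
  exact (stronglyMeasurable_truncatedIntegral ..).comp_measurable hRK

theorem exists_norm_fdens_le (hq : q < d) (hγ : γ < q) (hK : K < 0) (hu : 0 < u) :
    ∃ C, ∀ δ > 0,
      ‖fdens d q γ K u δ‖ ≤ C * (δ ^ ((q : ℝ) - γ - 1) * exp (-(2 * √(-K)) * δ)) := by
  have hq' : (q : ℝ) + 1 ≤ d := mod_cast hq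
  have hγ' : (γ : ℝ) + 1 ≤ q := mod_cast hγ
  set A := Dconst d q γ * omegaS (d - γ) / Cconst K d (d - q + γ) u
  set M := ∫ z in (0:ℝ)..1,
    (1 - z ^ 2) ^ (((d : ℝ) - q) / 2 - 1) * (1 + K * RK K u ^ 2) ^ (-((d : ℝ) + 1) / 2)
  refine ⟨4 * ‖A‖ * M, fun δ hδ => ?_⟩
  have hR := RK_pos hK hδ
  have hpow : RK K δ ^ ((q : ℝ) - γ - 1) ≤ δ ^ ((q : ℝ) - γ - 1) :=
    rpow_le_rpow hR.le (RK_le_self hK hδ.le) (by linarith)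
  have hinner : ‖truncatedIntegral q (((d : ℝ) - q) / 2 - 1) (-((d : ℝ) + 1) / 2) K
      (RK K u) (RK K δ)‖ ≤ M :=
    norm_truncatedIntegral_le q (by linarith) (by linarith [d.cast_nonneg (α := ℝ)]) hK.le
      (RK_pos hK hu).le (one_add_mul_RK_sq_pos hK u) hR
  rw [fdens_eq_mul_truncatedIntegral, norm_mul, norm_mul,
    norm_of_nonneg (by positivity : 0 ≤ RK K δ ^ ((q : ℝ) - γ - 1) * (cosh (√(-K) * δ) ^ 2)⁻¹)]
  calc _ ≤ ‖A‖ * (δ ^ ((q : ℝ) - γ - 1) * (4 * exp (-2 * (√(-K) * δ)))) * M := by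
        gcongr
        exact inv_cosh_sq_le _
    _ = _ := by ring_nf

theorem positive_moments_general (hq : q < d) (hγ : γ < q) (hK : K < 0) (hu : 0 < u) {α : ℝ}
    (hα : (γ : ℝ) - q < α) :
    IntegrableOn (fun δ : ℝ => δ ^ α * fdens d q γ K u δ) (Set.Ioi 0) := by
  obtain ⟨C, hC⟩ := exists_norm_fdens_le hq hγ hK hu
  have hgamma : IntegrableOn
      (fun δ : ℝ => δ ^ (α + ((q : ℝ) - γ - 1)) * exp (-(2 * √(-K)) * δ)) (Set.Ioi 0) := by
    have hrate : 0 < 2 * √(-K) := mul_pos two_pos (sqrt_pos.2 (neg_pos.2 hK))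
    simpa only [rpow_one] using
      integrableOn_rpow_mul_exp_neg_mul_rpow (by linarith) one_pos hrate
  have hmeas : StronglyMeasurable fun δ : ℝ => δ ^ α * fdens d q γ K u δ :=
    (measurable_id.pow_const α).stronglyMeasurable.mul (stronglyMeasurable_fdens d q γ K u)
  refine (hgamma.const_mul C).mono' hmeas.aestronglyMeasurable ?_
  filter_upwards [ae_restrict_mem measurableSet_Ioi] with δ (hδ : 0 < δ)
  calc ‖δ ^ α * fdens d q γ K u δ‖ = δ ^ α * ‖fdens d q γ K u δ‖ := by
        rw [norm_mul, norm_of_nonneg (rpow_nonneg hδ.le α)]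
    _ ≤ δ ^ α * (C * (δ ^ ((q : ℝ) - γ - 1) * exp (-(2 * √(-K)) * δ))) := by
        gcongr
        exact hC δ hδ
    _ = C * (δ ^ (α + ((q : ℝ) - γ - 1)) * exp (-(2 * √(-K)) * δ)) := by
        rw [rpow_add hδ]
        ring

end Density

/-- all conditional positive moments are finite, i.e. for every `α > 0`
the integral `∫_0^∞ δ^α f(δ) dδ` is finite. -/
theorem positive_moments (d q γ : ℕ) (hd : 2 ≤ d) (hq1 : 1 ≤ q) (hq2 : q ≤ d - 1)
    (hγ : γ ≤ q - 1) (K u : ℝ) (hK : K < 0) (hu : 0 < u) :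
    ∀ α : ℝ, 0 < α →
      MeasureTheory.IntegrableOn (fun δ : ℝ => δ ^ α * fdens d q γ K u δ)
        (Set.Ioi (0 : ℝ)) := by
  intro α hα
  have hγq : (γ : ℝ) ≤ q := by exact_mod_cast (by omega : γ ≤ q)
  exact positive_moments_general (by omega) (by omega) hK hu (by linarith)
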